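/- arXiv:2307.16683 — 4 statements merged into one kernel-verified Lean document; each statement's English description precedes it below -/
import Mathlib

section
/- Assume d₁ ≥ 2, μ₁ = d₁ − 1 and μᵢ = 0 for i = 2,…,r. Let (𝓛, X₁,…,X_r, Y₁,…,Y_r) be a solution of the expanding Ricci soliton ODE system on [s₀, ∞) with X₁(s) > 0 for all s ≥ s₀, and define Z = ((d₁−1)Y₁² + (ε/2)𝓛²)/X₁. Suppose that as s → ∞: Z(s) → 1, (d₁−1)Y₁(s)²/X₁(s) → 0, and (∑ⱼ dⱼXⱼ(s)²)/X₁(s) → 0. Then (Z(s) − 1)/X₁(s) → −1 as s → ∞. -/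
open Filter Topology

/-- `(𝓛, X₁,…,X_r, Y₁,…,Y_r)` solves the expanding Ricci soliton ODE system
`𝓛' = 𝓛(∑ⱼ dⱼXⱼ² − (ε/2)𝓛²)`,
`Xᵢ' = Xᵢ(∑ⱼ dⱼXⱼ² − (ε/2)𝓛² − 1) + μᵢYᵢ² + (ε/2)𝓛²`,
`Yᵢ' = Yᵢ(∑ⱼ dⱼXⱼ² − (ε/2)𝓛² − Xᵢ)` on the set `I`. -/
def IsSolitonSol (r : ℕ) (d : Fin r → ℕ) (μ : Fin r → ℝ) (ε : ℝ)
    (L : ℝ → ℝ) (X Y : Fin r → ℝ → ℝ) (I : Set ℝ) : Prop :=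
  (∀ s ∈ I, HasDerivAt L
      (L s * (∑ j, (d j : ℝ) * X j s ^ 2 - ε / 2 * L s ^ 2)) s) ∧
  (∀ i, ∀ s ∈ I, HasDerivAt (X i)
      (X i s * (∑ j, (d j : ℝ) * X j s ^ 2 - ε / 2 * L s ^ 2 - 1)
        + μ i * Y i s ^ 2 + ε / 2 * L s ^ 2) s) ∧
  (∀ i, ∀ s ∈ I, HasDerivAt (Y i)
      (Y i s * (∑ j, (d j : ℝ) * X j s ^ 2 - ε / 2 * L s ^ 2 - X i s)) s)

/-!
Put `p = ∑ⱼ dⱼXⱼ² − (ε/2)𝓛²`, so that `𝓛' = p𝓛`, `Z' = Z(p − (Z − 1)) − 2(d₁ − 1)Y₁²` and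
`X₁' = X₁(p + Z − 1)`. Hence `W = (Z − 1)/X₁` solves the scalar linear equation
`W' = (Zp − 2(d₁ − 1)Y₁²)/X₁ − (2Z − 1 + p)W`. Its forcing term tends to `−1`, because
`p/X₁ → −1`, and its damping coefficient tends to `1`, so `W` is attracted to `−1`.
-/

theorem tendsto_gronwallBound_atTop_of_neg {K : ℝ} (hK : K < 0) (δ ε : ℝ) :
    Tendsto (gronwallBound δ K ε) atTop (𝓝 (-ε / K)) := by
  have hexp : Tendsto (fun x => Real.exp (K * x)) atTop (𝓝 0) :=
    Real.tendsto_exp_atBot.comp (tendsto_id.const_mul_atTop_of_neg hK)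
  rw [gronwallBound_of_K_ne_0 hK.ne]
  have hlim := (hexp.const_mul δ).add ((hexp.sub_const 1).const_mul (ε / K))
  convert! hlim using 2
  ring

theorem eventually_lt_of_hasDerivAt_of_le_mul_add {u u' : ℝ → ℝ} {K ε b : ℝ} (hK : K < 0)
    (hu : ∀ᶠ s in atTop, HasDerivAt u (u' s) s) (hu' : ∀ᶠ s in atTop, u' s ≤ K * u s + ε)
    (hb : -ε / K < b) : ∀ᶠ s in atTop, u s < b := by
  obtain ⟨a, ha⟩ := eventually_atTop.1 (hu.and hu')
  have hbound : ∀ s ≥ a, u s ≤ gronwallBound (u a) K ε (s - a) := fun s hs =>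
    le_gronwallBound_of_liminf_deriv_right_le
      (fun t ht => (ha t ht.1).1.continuousAt.continuousWithinAt)
      (fun t ht _ hr => (ha t ht.1).1.hasDerivWithinAt.liminf_right_slope_le hr)
      le_rfl (fun t ht => (ha t ht.1).2) s ⟨hs, le_rfl⟩
  have hlim : Tendsto (fun s => gronwallBound (u a) K ε (s - a)) atTop (𝓝 (-ε / K)) :=
    (tendsto_gronwallBound_atTop_of_neg hK _ _).comp
      (tendsto_atTop_add_const_right _ (-a) tendsto_id)
  filter_upwards [eventually_ge_atTop a, hlim.eventually_lt_const hb] with s hs hlt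
  exact (hbound s hs).trans_lt hlt

section LinearODE

variable {E : Type*} [NormedAddCommGroup E] [InnerProductSpace ℝ E]

theorem two_mul_inner_sub_smul_le {c g : ℝ} (hc : 0 < c) (hg : c ≤ g) (v h : E) :
    2 * inner ℝ v (h - g • v) ≤ -c * ‖v‖ ^ 2 + ‖h‖ ^ 2 / c := by
  have hyoung : 2 * (‖v‖ * ‖h‖) ≤ c * ‖v‖ ^ 2 + ‖h‖ ^ 2 / c := by
    have hsq : 0 ≤ (c * ‖v‖ - ‖h‖) ^ 2 / c := by positivity
    have hexpand : (c * ‖v‖ - ‖h‖) ^ 2 / c = c * ‖v‖ ^ 2 + ‖h‖ ^ 2 / c - 2 * (‖v‖ * ‖h‖) := by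
      field_simp
      ring
    linarith
  calc 2 * inner ℝ v (h - g • v)
      = 2 * inner ℝ v h - 2 * (g * ‖v‖ ^ 2) := by
        rw [inner_sub_right, real_inner_smul_right, real_inner_self_eq_norm_sq, mul_sub]
    _ ≤ 2 * (‖v‖ * ‖h‖) - 2 * (c * ‖v‖ ^ 2) := by
        gcongr
        exact real_inner_le_norm v h
    _ ≤ -c * ‖v‖ ^ 2 + ‖h‖ ^ 2 / c := by linarith

theorem tendsto_zero_of_hasDerivAt_sub_smul {V h : ℝ → E} {g : ℝ → ℝ} {c : ℝ} (hc : 0 < c)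
    (hV : ∀ᶠ s in atTop, HasDerivAt V (h s - g s • V s) s) (hg : ∀ᶠ s in atTop, c ≤ g s)
    (hh : Tendsto h atTop (𝓝 0)) : Tendsto V atTop (𝓝 0) := by
  rw [NormedAddGroup.tendsto_nhds_zero]
  intro δ hδ
  have hforce : Tendsto (fun s => ‖h s‖ ^ 2 / c) atTop (𝓝 0) := by
    simpa using (hh.norm.pow 2).div_const c
  have hsq : ∀ᶠ s in atTop, ‖V s‖ ^ 2 < δ ^ 2 := by
    refine eventually_lt_of_hasDerivAt_of_le_mul_add (K := -c) (ε := c * (δ ^ 2 / 2))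
      (neg_lt_zero.2 hc) (hV.mono fun s hs => hs.norm_sq) ?_ ?_
    · filter_upwards [hg, hforce.eventually_le_const (show 0 < c * (δ ^ 2 / 2) by positivity)]
        with s hgs hfs
      exact (two_mul_inner_sub_smul_le hc hgs _ _).trans (by gcongr)
    · rw [neg_div_neg_eq, mul_div_cancel_left₀ _ hc.ne']
      exact half_lt_self (by positivity)
  exact hsq.mono fun s hs => lt_of_pow_lt_pow_left₀ 2 hδ.le hs

theorem tendsto_inv_smul_of_hasDerivAt_sub_smul {W f : ℝ → E} {g : ℝ → ℝ} {b : E} {c : ℝ}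
    (hc : 0 < c) (hW : ∀ᶠ s in atTop, HasDerivAt W (f s - g s • W s) s)
    (hf : Tendsto f atTop (𝓝 b)) (hg : Tendsto g atTop (𝓝 c)) :
    Tendsto W atTop (𝓝 (c⁻¹ • b)) := by
  have hforce : Tendsto (fun s => f s - g s • c⁻¹ • b) atTop (𝓝 0) := by
    have hlim := hf.sub (hg.smul_const (c⁻¹ • b))
    rwa [smul_inv_smul₀ hc.ne', sub_self] at hlim
  rw [← tendsto_sub_nhds_zero_iff]
  refine tendsto_zero_of_hasDerivAt_sub_smul (half_pos hc) ?_
    (hg.eventually_const_le (half_lt_self hc)) hforce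
  filter_upwards [hW] with s hs
  refine (hs.sub_const (c⁻¹ • b)).congr_deriv ?_
  rw [smul_sub]
  abel

end LinearODE

theorem tendsto_zero_of_sum_mul_sq_div {ι α : Type*} [Fintype ι] {l : Filter α} {w : ι → ℝ}
    {x : ι → α → ℝ} {i : ι} (hw : ∀ j, 0 ≤ w j) (hwi : 0 < w i) (hx : ∀ᶠ s in l, 0 < x i s)
    (hlim : Tendsto (fun s => (∑ j, w j * x j s ^ 2) / x i s) l (𝓝 0)) :
    Tendsto (x i) l (𝓝 0) := by
  have hupper : Tendsto (fun s => (∑ j, w j * x j s ^ 2) / x i s / w i) l (𝓝 0) := by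
    simpa using hlim.div_const (w i)
  refine squeeze_zero' (hx.mono fun s hs => hs.le) ?_ hupper
  filter_upwards [hx] with s hs
  have hterm : w i * x i s ^ 2 ≤ ∑ j, w j * x j s ^ 2 :=
    Finset.single_le_sum (f := fun j => w j * x j s ^ 2)
      (fun j _ => mul_nonneg (hw j) (sq_nonneg _)) (Finset.mem_univ i)
  rw [le_div_iff₀ hwi, le_div_iff₀ hs]
  linarith

section ScalarReduction

-- For the soliton system, `x = X₁`, `N = (d₁ − 1)Y₁² + (ε/2)𝓛²`, `a = (d₁ − 1)Y₁²`, and `p` is the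
-- logarithmic derivative of `𝓛`.
variable {x N : ℝ → ℝ}

theorem hasDerivAt_div_of_soliton {s p a : ℝ} (hne : x s ≠ 0)
    (hx : HasDerivAt x (x s * (p - 1) + N s) s)
    (hN : HasDerivAt N (2 * N s * p - 2 * a * x s) s) :
    HasDerivAt (fun t => N t / x t) (N s / x s * (p - (N s / x s - 1)) - 2 * a) s := by
  refine (hN.fun_div hx hne).congr_deriv ?_
  field_simp
  ring

theorem hasDerivAt_div_sub_one_div_of_soliton {s p a : ℝ} (hne : x s ≠ 0)
    (hx : HasDerivAt x (x s * (p - 1) + N s) s)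
    (hN : HasDerivAt N (2 * N s * p - 2 * a * x s) s) :
    HasDerivAt (fun t => (N t / x t - 1) / x t)
      ((N s / x s * (p / x s) - 2 * (a / x s))
        - (2 * (N s / x s) - 1 + p) * ((N s / x s - 1) / x s)) s := by
  refine (((hasDerivAt_div_of_soliton hne hx hN).sub_const 1).fun_div hx hne).congr_deriv ?_
  field_simp
  ring

theorem tendsto_div_sub_one_div_of_soliton {p a : ℝ → ℝ} {b : ℝ}
    (hne : ∀ᶠ s in atTop, x s ≠ 0)
    (hx : ∀ᶠ s in atTop, HasDerivAt x (x s * (p s - 1) + N s) s)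
    (hN : ∀ᶠ s in atTop, HasDerivAt N (2 * N s * p s - 2 * a s * x s) s)
    (hxlim : Tendsto x atTop (𝓝 0)) (hZlim : Tendsto (fun s => N s / x s) atTop (𝓝 1))
    (halim : Tendsto (fun s => a s / x s) atTop (𝓝 0))
    (hplim : Tendsto (fun s => p s / x s) atTop (𝓝 b)) :
    Tendsto (fun s => (N s / x s - 1) / x s) atTop (𝓝 b) := by
  have hp : Tendsto p atTop (𝓝 0) := by
    rw [← mul_zero b]
    exact (hplim.mul hxlim).congr' (hne.mono fun s hs => div_mul_cancel₀ _ hs)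
  have hforce : Tendsto (fun s => N s / x s * (p s / x s) - 2 * (a s / x s)) atTop (𝓝 b) := by
    simpa using (hZlim.mul hplim).sub (halim.const_mul 2)
  have hdamp : Tendsto (fun s => 2 * (N s / x s) - 1 + p s) atTop (𝓝 1) := by
    convert ((hZlim.const_mul 2).sub_const 1).add hp using 2
    norm_num
  have hode := (hne.and (hx.and hN)).mono fun s hs =>
    hasDerivAt_div_sub_one_div_of_soliton hs.1 hs.2.1 hs.2.2
  simpa using tendsto_inv_smul_of_hasDerivAt_sub_smul one_pos hode hforce hdamp

end ScalarReduction

theorem IsSolitonSol.hasDerivAt_mul_sq_Y_add_mul_sq_L {r : ℕ} {d : Fin r → ℕ} {μ : Fin r → ℝ}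
    {ε : ℝ} {L : ℝ → ℝ} {X Y : Fin r → ℝ → ℝ} {I : Set ℝ} (hsol : IsSolitonSol r d μ ε L X Y I)
    (i : Fin r) {s : ℝ} (hs : s ∈ I) :
    HasDerivAt (fun t => μ i * Y i t ^ 2 + ε / 2 * L t ^ 2)
      (2 * (μ i * Y i s ^ 2 + ε / 2 * L s ^ 2) * (∑ j, (d j : ℝ) * X j s ^ 2 - ε / 2 * L s ^ 2)
        - 2 * (μ i * Y i s ^ 2) * X i s) s := by
  obtain ⟨hL, -, hY⟩ := hsol
  refine ((((hY i s hs).fun_pow 2).const_mul (μ i)).fun_add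
    (((hL s hs).fun_pow 2).const_mul (ε / 2))).congr_deriv ?_
  push_cast
  ring

theorem stmt_13_general {r : ℕ} {d : Fin r → ℕ} {μ : Fin r → ℝ} {ε s₀ : ℝ} {L : ℝ → ℝ}
    {X Y : Fin r → ℝ → ℝ} (hsol : IsSolitonSol r d μ ε L X Y (Set.Ici s₀)) {i : Fin r}
    (hdi : 0 < d i) (hpos : ∀ s ≥ s₀, 0 < X i s) {Z : ℝ → ℝ}
    (hZ : ∀ s, Z s = (μ i * Y i s ^ 2 + ε / 2 * L s ^ 2) / X i s)
    (hZlim : Tendsto Z atTop (𝓝 1))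
    (hYlim : Tendsto (fun s => μ i * Y i s ^ 2 / X i s) atTop (𝓝 0))
    (hXlim : Tendsto (fun s => (∑ j, (d j : ℝ) * X j s ^ 2) / X i s) atTop (𝓝 0)) :
    Tendsto (fun s => (Z s - 1) / X i s) atTop (𝓝 (-1)) := by
  obtain rfl : Z = _ := funext hZ
  have hdomain : ∀ᶠ s in atTop, s ∈ Set.Ici s₀ := eventually_ge_atTop s₀
  have hXpos : ∀ᶠ s in atTop, 0 < X i s := hdomain.mono hpos
  have hX : Tendsto (X i) atTop (𝓝 0) :=
    tendsto_zero_of_sum_mul_sq_div (fun j => Nat.cast_nonneg (d j)) (Nat.cast_pos.2 hdi) hXpos hXlim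
  have hp : Tendsto (fun s => (∑ j, (d j : ℝ) * X j s ^ 2 - ε / 2 * L s ^ 2) / X i s) atTop
      (𝓝 (-1)) := by
    convert! hXlim.sub (hZlim.sub hYlim) using 2 <;> ring
  refine tendsto_div_sub_one_div_of_soliton (hXpos.mono fun s hs => hs.ne') ?_
    (hdomain.mono fun s hs => hsol.hasDerivAt_mul_sq_Y_add_mul_sq_L i hs) hX hZlim hYlim hp
  filter_upwards [hdomain] with s hs
  exact (hsol.2.1 i s hs).congr_deriv (add_assoc _ _ _)

/-- With `μ₁ = d₁ − 1`, `μᵢ = 0` for `i ≥ 2`: if `Z → 1`, `(d₁−1)Y₁²/X₁ → 0` and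
`(∑ⱼ dⱼXⱼ²)/X₁ → 0`, then `(Z − 1)/X₁ → −1`.  Here `0 : Fin r` plays the role of `1`. -/
theorem stmt_13 (r : ℕ) (hr : 1 ≤ r) (d : Fin r → ℕ) (hd : ∀ i, 0 < d i)
    (hd₁ : 2 ≤ d ⟨0, by omega⟩) (n : ℕ) (hn : n = ∑ i, d i)
    (μ : Fin r → ℝ) (hμ₁ : μ ⟨0, by omega⟩ = (d ⟨0, by omega⟩ : ℝ) - 1)
    (hμ : ∀ i : Fin r, i ≠ ⟨0, by omega⟩ → μ i = 0)
    (ε : ℝ) (hε : 0 < ε) (s₀ : ℝ) (L : ℝ → ℝ) (X Y : Fin r → ℝ → ℝ)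
    (hsol : IsSolitonSol r d μ ε L X Y (Set.Ici s₀))
    (hpos : ∀ s ≥ s₀, 0 < X ⟨0, by omega⟩ s)
    (Z : ℝ → ℝ)
    (hZ : ∀ s, Z s = (((d ⟨0, by omega⟩ : ℝ) - 1) * Y ⟨0, by omega⟩ s ^ 2
        + ε / 2 * L s ^ 2) / X ⟨0, by omega⟩ s)
    (hZlim : Tendsto Z atTop (𝓝 1))
    (hYlim : Tendsto (fun s => ((d ⟨0, by omega⟩ : ℝ) - 1) * Y ⟨0, by omega⟩ s ^ 2
        / X ⟨0, by omega⟩ s) atTop (𝓝 0))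
    (hXlim : Tendsto (fun s => (∑ j, (d j : ℝ) * X j s ^ 2) / X ⟨0, by omega⟩ s)
        atTop (𝓝 0)) :
    Tendsto (fun s => (Z s - 1) / X ⟨0, by omega⟩ s) atTop (𝓝 (-1)) := by
  simp only [← hμ₁] at hZ hYlim
  exact stmt_13_general hsol (hd _) hpos hZ hZlim hYlim hXlim
end

section
/- Let (𝓛, X₁,…,X_r, Y₁,…,Y_r) be a solution of the expanding Ricci soliton ODE system on [s₀, ∞) with 𝓛(s) > 0 for all s ≥ s₀. Fix an index i and a real number yᵢ* with μᵢ·(yᵢ*)² + ε/2 > 0. Suppose that as s → ∞: ∑ⱼ dⱼXⱼ(s)² → 0, 𝓛(s) → 0, and Yᵢ(s)/𝓛(s) → yᵢ*. Then Xᵢ(s)/𝓛(s)² → μᵢ·(yᵢ*)² + ε/2 as s → ∞. -/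
open Filter Topology

/-!
Put `q = ∑ⱼ dⱼXⱼ² − (ε/2)𝓛²`, so that `q → 0`. Since `𝓛' = q𝓛`, the ratio `v = Xᵢ/𝓛²` solves the
damped linear equation `v' = g − (1 + q)v` with `g = μᵢ(Yᵢ/𝓛)² + ε/2`. The damping tends to `1`
and the forcing `g` converges, so the exponential decay of the homogeneous equation pulls `v` to
the limit of `g`.
-/

section DampedLinearEquation

variable {E : Type*} [NormedAddCommGroup E] [NormedSpace ℝ E]

theorem eventually_slope_norm_lt_of_norm_deriv_add_smul {v : ℝ → E} {v' : E} {x a b : ℝ}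
    (hv : HasDerivWithinAt v v' (Set.Ici x) x) (hb : ‖v' + a • v x‖ - a * ‖v x‖ < b) :
    ∀ᶠ z in 𝓝[>] x, (z - x)⁻¹ * (‖v z‖ - ‖v x‖) < b := by
  -- The triangle inequality applied to `v` itself would lose the sign of `a`; removing the
  -- first-order decay of `v x` leaves only the forcing `v' + a • v x` to be estimated.
  set w : ℝ → E := fun z => v z - (1 - a * (z - x)) • v x with hw
  have hwx : w x = 0 := by simp [hw]
  have hw' : HasDerivWithinAt w (v' + a • v x) (Set.Ici x) x := by
    have hscalar : HasDerivWithinAt (fun z => 1 - a * (z - x)) (-a) (Set.Ici x) x := by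
      simpa using (((hasDerivWithinAt_id x (Set.Ici x)).sub_const x).const_mul a).const_sub 1
    simpa using hv.fun_sub (hscalar.smul_const (v x))
  have hw_slope : ∀ᶠ z in 𝓝[>] x, ‖z - x‖⁻¹ * (‖w z‖ - ‖w x‖) < b + a * ‖v x‖ :=
    hw'.Ioi_of_Ici.limsup_slope_norm_le (by linarith)
  have hpos : ∀ᶠ z in 𝓝[>] x, 0 < 1 - a * (z - x) := by
    have hcont : ContinuousAt (fun z => 1 - a * (z - x)) x := by fun_prop
    exact (hcont.eventually (lt_mem_nhds (by simp))).filter_mono nhdsWithin_le_nhds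
  filter_upwards [hw_slope, hpos, self_mem_nhdsWithin] with z hz hz_pos (hxz : x < z)
  have hzx : 0 < z - x := sub_pos.2 hxz
  rw [hwx, norm_zero, sub_zero, Real.norm_of_nonneg hzx.le, inv_mul_lt_iff₀ hzx] at hz
  rw [inv_mul_lt_iff₀ hzx]
  have hvz : ‖v z‖ ≤ ‖w z‖ + (1 - a * (z - x)) * ‖v x‖ := by
    calc ‖v z‖ = ‖w z + (1 - a * (z - x)) • v x‖ := by rw [hw, sub_add_cancel]
      _ ≤ ‖w z‖ + ‖(1 - a * (z - x)) • v x‖ := norm_add_le _ _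
      _ = ‖w z‖ + (1 - a * (z - x)) * ‖v x‖ := by
        rw [norm_smul, Real.norm_of_nonneg hz_pos.le]
  linarith

theorem norm_le_gronwallBound_of_hasDerivAt_sub_smul {v h : ℝ → E} {a : ℝ → ℝ} {T κ η : ℝ}
    (hv : ∀ s ≥ T, HasDerivAt v (h s - a s • v s) s) (ha : ∀ s ≥ T, κ ≤ a s)
    (hh : ∀ s ≥ T, ‖h s‖ ≤ η) {s : ℝ} (hs : T ≤ s) :
    ‖v s‖ ≤ gronwallBound ‖v T‖ (-κ) η (s - T) := by
  refine le_gronwallBound_of_liminf_deriv_right_le (f := fun t => ‖v t‖)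
    (f' := fun t => ‖h t‖ - a t * ‖v t‖)
    (fun t ht => (hv t ht.1).continuousAt.norm.continuousWithinAt)
    (fun t ht b hb => ?_) le_rfl (fun t ht => ?_) s ⟨hs, le_rfl⟩
  · refine (eventually_slope_norm_lt_of_norm_deriv_add_smul (a := a t)
      (hv t ht.1).hasDerivWithinAt ?_).frequently
    rwa [sub_add_cancel]
  · linarith [hh t ht.1, mul_le_mul_of_nonneg_right (ha t ht.1) (norm_nonneg (v t))]

theorem tendsto_gronwallBound_of_neg {K : ℝ} (hK : K < 0) (δ η : ℝ) :
    Tendsto (gronwallBound δ K η) atTop (𝓝 (-(η / K))) := by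
  have hexp : Tendsto (fun x => Real.exp (K * x)) atTop (𝓝 0) :=
    Real.tendsto_exp_atBot.comp (tendsto_id.const_mul_atTop_of_neg hK)
  rw [gronwallBound_of_K_ne_0 hK.ne]
  simpa using (hexp.const_mul δ).add ((hexp.sub_const 1).const_mul (η / K))

theorem tendsto_zero_of_hasDerivAt_sub_smul_s14 {v h : ℝ → E} {a : ℝ → ℝ} {κ : ℝ} (hκ : 0 < κ)
    (hv : ∀ᶠ s in atTop, HasDerivAt v (h s - a s • v s) s) (ha : ∀ᶠ s in atTop, κ ≤ a s)
    (hh : Tendsto h atTop (𝓝 0)) : Tendsto v atTop (𝓝 0) := by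
  rw [NormedAddGroup.tendsto_nhds_zero]
  intro ρ hρ
  obtain ⟨η, hη, hηρ⟩ : ∃ η, 0 < η ∧ η / κ < ρ :=
    ⟨κ * ρ / 2, by positivity, by rw [div_lt_iff₀ hκ]; linarith [mul_pos hκ hρ]⟩
  have hh_small : ∀ᶠ s in atTop, ‖h s‖ ≤ η :=
    (NormedAddGroup.tendsto_nhds_zero.1 hh η hη).mono fun _ => le_of_lt
  obtain ⟨T, hT⟩ := eventually_atTop.1 (hv.and (ha.and hh_small))
  have hshift : Tendsto (fun s => s - T) atTop atTop := tendsto_atTop_add_const_right _ _ tendsto_id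
  have hbound : Tendsto (fun s => gronwallBound ‖v T‖ (-κ) η (s - T)) atTop (𝓝 (η / κ)) := by
    simpa [div_neg, Function.comp_def] using
      (tendsto_gronwallBound_of_neg (neg_lt_zero.2 hκ) ‖v T‖ η).comp hshift
  filter_upwards [hbound.eventually_lt_const hηρ, eventually_ge_atTop T] with s hs hTs
  exact (norm_le_gronwallBound_of_hasDerivAt_sub_smul (fun t ht => (hT t ht).1)
    (fun t ht => (hT t ht).2.1) (fun t ht => (hT t ht).2.2) hTs).trans_lt hs

theorem tendsto_of_hasDerivAt_sub_smul {v h : ℝ → E} {a : ℝ → ℝ} {α : ℝ} {β : E} (hα : 0 < α)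
    (hv : ∀ᶠ s in atTop, HasDerivAt v (h s - a s • v s) s) (ha : Tendsto a atTop (𝓝 α))
    (hh : Tendsto h atTop (𝓝 β)) : Tendsto v atTop (𝓝 (α⁻¹ • β)) := by
  rw [← tendsto_sub_nhds_zero_iff]
  have hforcing : Tendsto (fun s => h s - a s • α⁻¹ • β) atTop (𝓝 0) := by
    simpa [smul_smul, hα.ne'] using hh.sub (ha.smul_const (α⁻¹ • β))
  refine tendsto_zero_of_hasDerivAt_sub_smul_s14 (half_pos hα) ?_
    (ha.eventually_const_le (half_lt_self hα)) hforcing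
  filter_upwards [hv] with s hs
  exact (hs.sub_const _).congr_deriv (by module)

end DampedLinearEquation

theorem hasDerivAt_div_pow {x L : ℝ → ℝ} {p q g s : ℝ} (n : ℕ) (hLs : L s ≠ 0)
    (hL : HasDerivAt L (L s * q) s) (hx : HasDerivAt x (x s * p + g * L s ^ n) s) :
    HasDerivAt (fun t => x t / L t ^ n) (g - (n * q - p) * (x s / L s ^ n)) s := by
  have hpow : HasDerivAt (fun t => L t ^ n) (n * q * L s ^ n) s := by
    refine (hL.fun_pow n).congr_deriv ?_
    cases n with
    | zero => simp
    | succ m => rw [Nat.add_sub_cancel]; ring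
  refine (hx.fun_div hpow (pow_ne_zero n hLs)).congr_deriv ?_
  field_simp
  ring

theorem stmt_14_general {r : ℕ} {d : Fin r → ℕ} {μ : Fin r → ℝ} {ε s₀ : ℝ}
    {L : ℝ → ℝ} {X Y : Fin r → ℝ → ℝ} (hsol : IsSolitonSol r d μ ε L X Y (Set.Ici s₀))
    (hL : ∀ᶠ s in atTop, L s ≠ 0) (i : Fin r) {y : ℝ}
    (hXlim : Tendsto (fun s => ∑ j, (d j : ℝ) * X j s ^ 2) atTop (𝓝 0))
    (hLlim : Tendsto L atTop (𝓝 0)) (hYlim : Tendsto (fun s => Y i s / L s) atTop (𝓝 y)) :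
    Tendsto (fun s => X i s / L s ^ 2) atTop (𝓝 (μ i * y ^ 2 + ε / 2)) := by
  set q : ℝ → ℝ := fun s => ∑ j, (d j : ℝ) * X j s ^ 2 - ε / 2 * L s ^ 2 with hq
  set g : ℝ → ℝ := fun s => μ i * (Y i s / L s) ^ 2 + ε / 2 with hg
  have hq_lim : Tendsto q atTop (𝓝 0) := by
    simpa using hXlim.sub ((hLlim.pow 2).const_mul (ε / 2))
  have hg_lim : Tendsto g atTop (𝓝 (μ i * y ^ 2 + ε / 2)) :=
    ((hYlim.pow 2).const_mul (μ i)).add_const (ε / 2)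
  have hrate_lim : Tendsto (fun s => (2 : ℕ) * q s - (q s - 1)) atTop (𝓝 1) := by
    simpa using (hq_lim.const_mul 2).sub (hq_lim.sub_const 1)
  have hratio : ∀ᶠ s in atTop, HasDerivAt (fun t => X i t / L t ^ 2)
      (g s - ((2 : ℕ) * q s - (q s - 1)) * (X i s / L s ^ 2)) s := by
    filter_upwards [hL, eventually_ge_atTop s₀] with s hLs hs
    refine hasDerivAt_div_pow 2 hLs (hsol.1 s hs) ((hsol.2.1 i s hs).congr_deriv ?_)
    simp only [hq, hg]
    field_simp
    ring
  simpa using tendsto_of_hasDerivAt_sub_smul one_pos hratio hrate_lim hg_lim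

/-- If `∑ⱼ dⱼXⱼ² → 0`, `𝓛 → 0` and `Yᵢ/𝓛 → yᵢ*` with `μᵢ(yᵢ*)² + ε/2 > 0`,
then `Xᵢ/𝓛² → μᵢ(yᵢ*)² + ε/2`. -/
theorem stmt_14 (r : ℕ) (hr : 1 ≤ r) (d : Fin r → ℕ) (hd : ∀ i, 0 < d i)
    (μ : Fin r → ℝ) (ε : ℝ) (hε : 0 < ε) (s₀ : ℝ)
    (L : ℝ → ℝ) (X Y : Fin r → ℝ → ℝ)
    (hsol : IsSolitonSol r d μ ε L X Y (Set.Ici s₀))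
    (hL : ∀ s ≥ s₀, 0 < L s)
    (i : Fin r) (yistar : ℝ) (hyi : 0 < μ i * yistar ^ 2 + ε / 2)
    (hXlim : Tendsto (fun s => ∑ j, (d j : ℝ) * X j s ^ 2) atTop (𝓝 0))
    (hLlim : Tendsto L atTop (𝓝 0))
    (hYlim : Tendsto (fun s => Y i s / L s) atTop (𝓝 yistar)) :
    Tendsto (fun s => X i s / L s ^ 2) atTop (𝓝 (μ i * yistar ^ 2 + ε / 2)) :=
  stmt_14_general hsol ((eventually_ge_atTop s₀).mono fun s hs => (hL s hs).ne') i
    hXlim hLlim hYlim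
end

section
/- Assume n ≥ 2 and μᵢ ≥ 0 for all i. Let (𝓛, X₁,…,X_r, Y₁,…,Y_r) be a solution of the expanding Ricci soliton ODE system on [s₀, b) (with b ∈ (s₀, ∞]) such that 𝓛(s) > 0, Xᵢ(s) > 0, Yᵢ(s) > 0 for all i and all s, and 𝒮₁(s) ≤ 0 for all s. Then for all s ∈ [s₀, b): ∑ᵢ dᵢXᵢ(s)² ≤ 1 (in particular Xᵢ(s) ≤ 1/√(dᵢ) for every i), (n−1)(ε/2)𝓛(s)² ≤ 1, and Yᵢ(s) ≤ Yᵢ(s₀)·e^{s − s₀} for every i. In particular the solution remains bounded on every bounded subinterval of [s₀, b). -/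
open Filter Topology

/-!
The condition `𝒮₁ ≤ 0` says that a sum of three nonnegative terms is at most `1`, so each term is.
With `∑ⱼ dⱼXⱼ² ≤ 1` known, the growth rate `∑ⱼ dⱼXⱼ² − (ε/2)𝓛² − Xᵢ` of `Yᵢ` is at most `1`, and
Grönwall's inequality bounds `Yᵢ`.
-/

open Set

section Pointwise

variable {ι : Type*} [Fintype ι] {d μ x y : ι → ℝ} {κ l : ℝ}

/-- The quantity `𝒮₁` at the point `(l, x, y)` of phase space, for real weights `d` and an arbitrary
coefficient `κ` of `l²`; in the expanding soliton system `κ = (n − 1)(ε/2)` with `n = ∑ᵢ dᵢ`. -/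
def solitonS₁ (d μ : ι → ℝ) (κ l : ℝ) (x y : ι → ℝ) : ℝ :=
  ∑ i, d i * x i ^ 2 + ∑ i, d i * μ i * y i ^ 2 + κ * l ^ 2 - 1

theorem sum_mul_sq_le_one_of_solitonS₁_nonpos (hd : ∀ i, 0 ≤ d i) (hμ : ∀ i, 0 ≤ μ i)
    (hκ : 0 ≤ κ) (hS : solitonS₁ d μ κ l x y ≤ 0) : ∑ i, d i * x i ^ 2 ≤ 1 := by
  have hy : 0 ≤ ∑ i, d i * μ i * y i ^ 2 :=
    Finset.sum_nonneg fun i _ => mul_nonneg (mul_nonneg (hd i) (hμ i)) (sq_nonneg _)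
  have hl : 0 ≤ κ * l ^ 2 := mul_nonneg hκ (sq_nonneg l)
  unfold solitonS₁ at hS
  linarith

theorem mul_sq_le_one_of_solitonS₁_nonpos (hd : ∀ i, 0 ≤ d i) (hμ : ∀ i, 0 ≤ μ i)
    (hS : solitonS₁ d μ κ l x y ≤ 0) : κ * l ^ 2 ≤ 1 := by
  have hx : 0 ≤ ∑ i, d i * x i ^ 2 :=
    Finset.sum_nonneg fun i _ => mul_nonneg (hd i) (sq_nonneg _)
  have hy : 0 ≤ ∑ i, d i * μ i * y i ^ 2 :=
    Finset.sum_nonneg fun i _ => mul_nonneg (mul_nonneg (hd i) (hμ i)) (sq_nonneg _)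
  unfold solitonS₁ at hS
  linarith

theorem le_one_div_sqrt_of_sum_mul_sq_le_one (hd : ∀ j, 0 ≤ d j)
    (hx : ∑ j, d j * x j ^ 2 ≤ 1) {i : ι} (hi : 0 < d i) : x i ≤ 1 / √(d i) := by
  have hterm : d i * x i ^ 2 ≤ 1 :=
    (Finset.single_le_sum (fun j _ => mul_nonneg (hd j) (sq_nonneg (x j)))
      (Finset.mem_univ i)).trans hx
  rw [one_div, ← Real.sqrt_inv, ← one_div]
  exact Real.le_sqrt_of_sq_le ((le_div_iff₀' hi).2 hterm)

end Pointwise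

theorem le_mul_exp_of_hasDerivWithinAt_le_mul {f f' : ℝ → ℝ} {a b K : ℝ} (hab : a ≤ b)
    (hf : ∀ t ∈ Icc a b, HasDerivWithinAt f (f' t) (Icc a b) t)
    (hf' : ∀ t ∈ Ico a b, f' t ≤ K * f t) : f b ≤ f a * Real.exp (K * (b - a)) := by
  have hright : ∀ t ∈ Ico a b, HasDerivWithinAt f (f' t) (Ici t) t := fun t ht =>
    (hf t (Ico_subset_Icc_self ht)).mono_of_mem_nhdsWithin (Icc_mem_nhdsGE_of_mem ht)
  rw [← gronwallBound_ε0]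
  exact le_gronwallBound_of_liminf_deriv_right_le (fun t ht => (hf t ht).continuousWithinAt)
    (fun t ht _ => (hright t ht).liminf_right_slope_le) le_rfl
    (fun t ht => (hf' t ht).trans_eq (add_zero _).symm) b (right_mem_Icc.2 hab)

theorem stmt_18_general {ι : Type*} [Fintype ι] {d μ : ι → ℝ} (hd : ∀ i, 0 < d i)
    (hμ : ∀ i, 0 ≤ μ i) {κ ε : ℝ} (hκ : 0 ≤ κ) (hε : 0 ≤ ε) {I : Set ℝ} (hI : I.OrdConnected)
    {L : ℝ → ℝ} {X Y : ι → ℝ → ℝ}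
    (hderiv : ∀ i, ∀ s ∈ I, HasDerivWithinAt (Y i)
      (Y i s * (∑ j, d j * X j s ^ 2 - ε / 2 * L s ^ 2 - X i s)) I s)
    (hX : ∀ s ∈ I, ∀ i, 0 ≤ X i s) (hY : ∀ s ∈ I, ∀ i, 0 ≤ Y i s)
    (hS : ∀ s ∈ I, solitonS₁ d μ κ (L s) (X · s) (Y · s) ≤ 0)
    {s₀ s : ℝ} (hs₀ : s₀ ∈ I) (hs : s ∈ I) (hle : s₀ ≤ s) :
    (∑ i, d i * X i s ^ 2 ≤ 1) ∧ (∀ i, X i s ≤ 1 / √(d i)) ∧ κ * L s ^ 2 ≤ 1 ∧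
      ∀ i, Y i s ≤ Y i s₀ * Real.exp (s - s₀) := by
  have hd₀ : ∀ i, 0 ≤ d i := fun i => (hd i).le
  have hsum : ∀ t ∈ I, ∑ i, d i * X i t ^ 2 ≤ 1 := fun t ht =>
    sum_mul_sq_le_one_of_solitonS₁_nonpos hd₀ hμ hκ (hS t ht)
  refine ⟨hsum s hs, fun i => le_one_div_sqrt_of_sum_mul_sq_le_one hd₀ (hsum s hs) (hd i),
    mul_sq_le_one_of_solitonS₁_nonpos hd₀ hμ (hS s hs), fun i => ?_⟩
  have hsub : Icc s₀ s ⊆ I := hI.out hs₀ hs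
  have hrate : ∀ t ∈ I, ∑ j, d j * X j t ^ 2 - ε / 2 * L t ^ 2 - X i t ≤ 1 := fun t ht => by
    have hL : 0 ≤ ε / 2 * L t ^ 2 := by positivity
    linarith [hsum t ht, hX t ht i]
  rw [← one_mul (s - s₀)]
  refine le_mul_exp_of_hasDerivWithinAt_le_mul hle
    (fun t ht => (hderiv i t (hsub ht)).mono hsub) fun t ht => ?_
  have htI : t ∈ I := hsub (Ico_subset_Icc_self ht)
  rw [mul_comm]
  exact mul_le_mul_of_nonneg_right (hrate t htI) (hY t htI i)

/-- A priori bounds on solutions with positive coordinates in the locus `𝒮₁ ≤ 0`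
(with all `μᵢ ≥ 0`), on a (possibly infinite) interval `[s₀, b)`: `∑ᵢ dᵢXᵢ² ≤ 1`
(so `Xᵢ ≤ 1/√dᵢ`), `(n−1)(ε/2)𝓛² ≤ 1`, and `Yᵢ(s) ≤ Yᵢ(s₀)e^{s−s₀}`; in particular
the solution stays bounded on bounded subintervals. -/
theorem stmt_18 (r : ℕ) (hr : 1 ≤ r) (d : Fin r → ℕ) (hd : ∀ i, 0 < d i)
    (n : ℕ) (hn : n = ∑ i, d i) (hn2 : 2 ≤ n)
    (μ : Fin r → ℝ) (hμ : ∀ i, 0 ≤ μ i) (ε : ℝ) (hε : 0 < ε)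
    (s₀ : ℝ) (b : EReal) (hb : (s₀ : EReal) < b)
    (L : ℝ → ℝ) (X Y : Fin r → ℝ → ℝ)
    (hsol : IsSolitonSol r d μ ε L X Y {s : ℝ | s₀ ≤ s ∧ (s : EReal) < b})
    (hpos : ∀ s, s₀ ≤ s → (s : EReal) < b →
      0 < L s ∧ ∀ i, 0 < X i s ∧ 0 < Y i s)
    (hS₁ : ∀ s, s₀ ≤ s → (s : EReal) < b →
      ∑ i, (d i : ℝ) * X i s ^ 2 + ∑ i, (d i : ℝ) * μ i * Y i s ^ 2
        + ((n : ℝ) - 1) * (ε / 2) * L s ^ 2 - 1 ≤ 0) :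
    ∀ s, s₀ ≤ s → (s : EReal) < b →
      (∑ i, (d i : ℝ) * X i s ^ 2 ≤ 1) ∧
      (∀ i, X i s ≤ 1 / Real.sqrt (d i)) ∧
      ((n : ℝ) - 1) * (ε / 2) * L s ^ 2 ≤ 1 ∧
      ∀ i, Y i s ≤ Y i s₀ * Real.exp (s - s₀) :=
  have hn1 : (0 : ℝ) ≤ n - 1 := sub_nonneg.2 (Nat.one_le_cast.2 (one_le_two.trans hn2))
  fun _ hs hsb => stmt_18_general (fun i => Nat.cast_pos.2 (hd i)) hμ
    (mul_nonneg hn1 (half_pos hε).le) hε.le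
    (ordConnected_Ici.inter (ordConnected_Iio.preimage_mono EReal.coe_strictMono.monotone))
    (fun i t ht => (hsol.2.2 i t ht).hasDerivWithinAt)
    (fun t ht i => ((hpos t ht.1 ht.2).2 i).1.le) (fun t ht i => ((hpos t ht.1 ht.2).2 i).2.le)
    (fun t ht => hS₁ t ht.1 ht.2) ⟨self_mem_Ici, hb⟩ ⟨hs, hsb⟩ hs
end

section
/- Let (𝓛, X₁,…,X_r, Y₁,…,Y_r) be a solution of the expanding Ricci soliton ODE system on [s₀, ∞) with 𝓛(s₀) > 0, and suppose the Einstein constraint ∑ᵢ dᵢXᵢ(s) = 1 holds for all s ≥ s₀. Then 𝓛(s) ≥ min(𝓛(s₀), √(2/(nε))) for all s ≥ s₀; in particular 𝓛 is bounded away from zero on [s₀, ∞). -/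
open Filter Topology

/-!
By Cauchy–Schwarz, `1 ≤ (∑ dᵢ) (∑ dᵢ Xᵢ²)` on an Einstein trajectory, so `𝓛' ≥ 𝓛 (1/n - (ε/2) 𝓛²)`
wherever `𝓛 > 0`. The right-hand side is positive for `0 < 𝓛 < √(2/(nε))`, so `𝓛` cannot decrease
through any level in this range.
-/

theorem le_image_of_deriv_right_pos_boundary {f f' : ℝ → ℝ} {a b c : ℝ}
    (hf : ContinuousOn f (Set.Icc a b))
    (hf' : ∀ t ∈ Set.Ico a b, HasDerivWithinAt f (f' t) (Set.Ici t) t)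
    (ha : c ≤ f a) (hpos : ∀ t ∈ Set.Ico a b, f t = c → 0 < f' t) :
    ∀ t ∈ Set.Icc a b, c ≤ f t := by
  intro t ht
  have hneg : -f t ≤ -c :=
    image_le_of_deriv_right_lt_deriv_boundary (f := fun t => -f t) (B := fun _ => -c)
      hf.neg (fun t ht => (hf' t ht).neg) (neg_le_neg ha) (fun t => hasDerivAt_const t (-c))
      (fun t ht hft => neg_neg_of_pos (hpos t ht (neg_injective hft))) ht
  exact neg_le_neg_iff.mp hneg

theorem min_le_image_of_deriv_right_pos {f f' : ℝ → ℝ} {a b k m : ℝ}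
    (hf : ContinuousOn f (Set.Icc a b))
    (hf' : ∀ t ∈ Set.Ico a b, HasDerivWithinAt f (f' t) (Set.Ici t) t)
    (ha : k < f a) (hkm : k < m)
    (hpos : ∀ t ∈ Set.Ico a b, f t ∈ Set.Ioo k m → 0 < f' t) :
    ∀ t ∈ Set.Icc a b, min (f a) m ≤ f t := by
  intro t ht
  by_contra! hlt
  obtain ⟨c, hc, hc_lt⟩ := exists_between (max_lt hlt (lt_min ha hkm))
  obtain ⟨hfc, hkc⟩ := max_lt_iff.mp hc
  obtain ⟨hca, hcm⟩ := lt_min_iff.mp hc_lt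
  have hcf : c ≤ f t := le_image_of_deriv_right_pos_boundary hf hf' hca.le
    (fun u hu hfu => hpos u hu (hfu ▸ ⟨hkc, hcm⟩)) t ht
  exact hcf.not_gt hfc

theorem min_sqrt_div_le_of_mul_sub_sq_le_deriv_right {f f' : ℝ → ℝ} {a b p q : ℝ}
    (hp : 0 < p) (hq : 0 < q) (hf : ContinuousOn f (Set.Icc a b))
    (hf' : ∀ t ∈ Set.Ico a b, HasDerivWithinAt f (f' t) (Set.Ici t) t) (ha : 0 < f a)
    (hgrowth : ∀ t ∈ Set.Ico a b, 0 < f t → f t * (p - q * f t ^ 2) ≤ f' t) :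
    ∀ t ∈ Set.Icc a b, min (f a) (Real.sqrt (p / q)) ≤ f t := by
  refine min_le_image_of_deriv_right_pos hf hf' ha (Real.sqrt_pos.mpr (div_pos hp hq)) ?_
  rintro t ht ⟨hft, hft_lt⟩
  have hlevel : q * f t ^ 2 < p := (lt_div_iff₀' hq).mp ((Real.lt_sqrt hft.le).mp hft_lt)
  exact (mul_pos hft (sub_pos.mpr hlevel)).trans_le (hgrowth t ht hft)

theorem sq_sum_mul_le_sum_mul_sum_mul_sq {ι R : Type*} [CommSemiring R] [LinearOrder R]
    [IsStrictOrderedRing R] [ExistsAddOfLE R] (s : Finset ι) {w : ι → R}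
    (hw : ∀ i ∈ s, 0 ≤ w i) (x : ι → R) :
    (∑ i ∈ s, w i * x i) ^ 2 ≤ (∑ i ∈ s, w i) * ∑ i ∈ s, w i * x i ^ 2 :=
  Finset.sum_sq_le_sum_mul_sum_of_sq_le_mul s hw
    (fun i hi => mul_nonneg (hw i hi) (sq_nonneg _)) (fun i _ => le_of_eq (by ring))

theorem stmt_19_general {ι : Type*} [Fintype ι] {d : ι → ℝ} (hd : ∀ i, 0 ≤ d i)
    {ε : ℝ} (hε : 0 < ε) {s₀ : ℝ} {L : ℝ → ℝ} {X : ι → ℝ → ℝ}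
    (hL : ∀ s ≥ s₀, HasDerivWithinAt L
      (L s * (∑ i, d i * X i s ^ 2 - ε / 2 * L s ^ 2)) (Set.Ici s₀) s)
    (hL₀ : 0 < L s₀) (hX : ∀ s ≥ s₀, 1 ≤ ∑ i, d i * X i s) :
    ∀ s ≥ s₀, min (L s₀) (Real.sqrt (2 / ((∑ i, d i) * ε))) ≤ L s := by
  have hcs : ∀ s ≥ s₀, 1 ≤ (∑ i, d i) * ∑ i, d i * X i s ^ 2 := fun s hs =>
    (one_le_pow₀ (hX s hs)).trans
      (sq_sum_mul_le_sum_mul_sum_mul_sq Finset.univ (fun i _ => hd i) (X · s))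
  have hn : 0 < ∑ i, d i := (Finset.sum_nonneg fun i _ => hd i).lt_of_ne' fun h => by
    exact zero_lt_one.not_ge (by simpa only [h, zero_mul] using hcs s₀ le_rfl)
  have hthreshold : 2 / ((∑ i, d i) * ε) = 1 / (∑ i, d i) / (ε / 2) := by field_simp
  intro s hs
  rw [hthreshold]
  refine min_sqrt_div_le_of_mul_sub_sq_le_deriv_right (one_div_pos.mpr hn) (half_pos hε)
    (fun t ht => (hL t ht.1).continuousWithinAt.mono Set.Icc_subset_Ici_self)
    (fun t ht => (hL t ht.1).mono (Set.Ici_subset_Ici.mpr ht.1)) hL₀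
    (fun t ht hLt => ?_) s (Set.right_mem_Icc.mpr hs)
  gcongr
  exact (div_le_iff₀' hn).mpr (hcs t ht.1)

/-- Along Einstein trajectories (where `∑ᵢ dᵢXᵢ = 1`), `𝓛` is bounded away from
zero:  `𝓛(s) ≥ min(𝓛(s₀), √(2/(nε)))` for all `s ≥ s₀`. -/
theorem stmt_19 (r : ℕ) (hr : 1 ≤ r) (d : Fin r → ℕ) (hd : ∀ i, 0 < d i)
    (n : ℕ) (hn : n = ∑ i, d i) (μ : Fin r → ℝ) (ε : ℝ) (hε : 0 < ε)
    (s₀ : ℝ) (L : ℝ → ℝ) (X Y : Fin r → ℝ → ℝ)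
    (hsol : IsSolitonSol r d μ ε L X Y (Set.Ici s₀))
    (hL₀ : 0 < L s₀)
    (hEinstein : ∀ s ≥ s₀, ∑ i, (d i : ℝ) * X i s = 1) :
    ∀ s ≥ s₀, min (L s₀) (Real.sqrt (2 / ((n : ℝ) * ε))) ≤ L s := by
  subst hn
  simpa only [Nat.cast_sum] using stmt_19_general (fun i => (d i).cast_nonneg) hε
    (fun s hs => (hsol.1 s hs).hasDerivWithinAt) hL₀ (fun s hs => (hEinstein s hs).ge)
end
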